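/- Let n ≥ 3 be odd and set σ = (n−1)(n−3)/2 (this is c_{n−1} − (n−1)/2). Then for every i ∈ [n], as elements of k[x]/J_n, x_{nn}^{σ+1} · p^+_{n,i} = x_{in} · p_n; that is, x_{nn}^{σ+1} · p^+_{n,i} − x_{in} · p_n ∈ J_n. -/

import Mathlib

/-!
Modulo `J_n` every square `x_{ij}^2` may be replaced by `x_{ii} x_{jj}`, so each monomial equals one
that is squarefree off the diagonal, and the latter is determined by its degree together with its
off-diagonal parities. The parities of the `x_{in}` are in turn forced by the degree and the
parities of the `x_{ij}` with `i, j < n`, that is, by a subgraph of the complete graph on `[n-1]`.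
Expanding `x_{in} p_n` gives exactly one monomial for each such subgraph, all of the same degree.
The canonical monomials of that degree are `x_{nn}^{σ+1}` times those of `p⁺_{n,i}`, because the
degree in the last index is large while at most `n-1` of it comes from off-diagonal variables.
-/

open scoped BigOperators

namespace Veronese

open MvPolynomial

/-- `c m = C(m,2)`. -/
def c (m : ℕ) : ℕ := m.choose 2

variable (n : ℕ)

/-- multiplicity (as ℤ) of the index `i` in the unordered pair `s`. -/
def wt (s : Sym2 (Fin n)) : Fin n → ℤ :=
  Sym2.lift ⟨fun a b i => (if i = a then 1 else 0) + (if i = b then 1 else 0),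
    fun a b => funext fun i => add_comm _ _⟩ s

/-- The Veronese grading map `V_n : ℤ^P → ℤ^n`, sending `e_{ij} ↦ e_i + e_j`. -/
def Vmap : (Sym2 (Fin n) → ℤ) →ₗ[ℤ] (Fin n → ℤ) where
  toFun u := fun i => ∑ s : Sym2 (Fin n), u s * wt n s i
  map_add' u v := funext fun i => by
    simp [add_mul, Finset.sum_add_distrib]
  map_smul' m u := funext fun i => by
    simp [Finset.mul_sum, smul_eq_mul, mul_assoc]

/-- The Veronese lattice `L_n = ker V_n`. -/
def Llat : Submodule ℤ (Sym2 (Fin n) → ℤ) := LinearMap.ker (Vmap n)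

/-- standard basis vector `e_{ij}` of `ℤ^P`. -/
def e (i j : Fin n) : Sym2 (Fin n) → ℤ := Pi.single s(i, j) 1

lemma e_comm (i j : Fin n) : e n i j = e n j i := by
  unfold e; rw [Sym2.eq_swap]

/-- `[ij|ij] = e_{ii} + e_{jj} - 2 e_{ij}`. -/
def minorVec (i j : Fin n) : Sym2 (Fin n) → ℤ := e n i i + e n j j - 2 • e n i j

/-- The principal minor lattice `L'_n`. -/
def L'lat : Submodule ℤ (Sym2 (Fin n) → ℤ) :=
  Submodule.span ℤ {v | ∃ i j : Fin n, i < j ∧ v = minorVec n i j}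

/-- the last index `n` (zero-based: `n-1`) of `Fin n`. -/
def lastIdx (hn : 0 < n) : Fin n := ⟨n - 1, Nat.sub_lt hn one_pos⟩

/-- embedding `[n-1] → [n]`. -/
def ι : Fin (n - 1) → Fin n := Fin.castLE (Nat.sub_le n 1)

/-- `[in|jn] = e_{ij} + e_{nn} - e_{in} - e_{jn}` for `i,j ∈ [n-1]`. -/
def Bvec (hn : 0 < n) : Sym2 (Fin (n - 1)) → (Sym2 (Fin n) → ℤ) :=
  Sym2.lift ⟨fun i j =>
      e n (ι n i) (ι n j) + e n (lastIdx n hn) (lastIdx n hn)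
        - e n (ι n i) (lastIdx n hn) - e n (ι n j) (lastIdx n hn),
    fun i j => by dsimp only; rw [e_comm n (ι n i) (ι n j)]; ring⟩

/-- The family `B'`: `[in|in]` on the diagonal, `2[in|jn]` off it. -/
noncomputable def B'vec (hn : 0 < n) (s : Sym2 (Fin (n - 1))) : Sym2 (Fin n) → ℤ :=
  if s.IsDiag then Bvec n hn s else 2 • Bvec n hn s

/-- multiplicity (as ℕ) of the index `i` in the unordered pair `s`. -/
def wtN (s : Sym2 (Fin n)) : Fin n → ℕ :=
  Sym2.lift ⟨fun a b i => (if i = a then 1 else 0) + (if i = b then 1 else 0),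
    fun a b => funext fun i => add_comm _ _⟩ s

/-- The Veronese degree of an exponent vector `u ∈ ℕ^P`. -/
def VN (u : Sym2 (Fin n) →₀ ℕ) : Fin n → ℕ := fun i => ∑ s : Sym2 (Fin n), u s * wtN n s i

/-- The fiber `V_n^{-1}[b] = {u ∈ ℕ^P : V_n u = b}`. -/
def fiber (b : Fin n → ℕ) : Set (Sym2 (Fin n) →₀ ℕ) := {u | VN n u = b}

/-- natural inclusion `ℕ^P → ℤ^P`. -/
def toZ (u : Sym2 (Fin n) →₀ ℕ) : Sym2 (Fin n) → ℤ := fun s => (u s : ℤ)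

lemma fiber_finite (b : Fin n → ℕ) : (fiber n b).Finite := by
  classical
  have hsub : fiber n b ⊆
      ↑(Finset.Iic ((Finsupp.equivFunOnFinite.symm fun _ => ∑ i, b i) : Sym2 (Fin n) →₀ ℕ)) := by
    intro u hu
    simp only [Finset.coe_Iic, Set.mem_Iic, Finsupp.le_def]
    intro s
    induction s using Sym2.ind with
    | _ i j =>
      have h1 : u s(i, j) * wtN n s(i, j) i ≤ VN n u i :=
        Finset.single_le_sum (f := fun s => u s * wtN n s i)
          (fun s _ => Nat.zero_le _) (Finset.mem_univ s(i, j))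
      have h2 : 1 ≤ wtN n s(i, j) i := by
        simp only [wtN, Sym2.lift_mk, if_pos rfl]
        exact Nat.le_add_right 1 _
      have h3 : u s(i, j) ≤ b i := by
        have hb : VN n u i = b i := congrFun hu i
        calc u s(i, j) ≤ u s(i, j) * wtN n s(i, j) i := Nat.le_mul_of_pos_right _ h2
          _ ≤ VN n u i := h1
          _ = b i := hb
      calc u s(i, j) ≤ b i := h3
        _ ≤ ∑ i, b i := Finset.single_le_sum (fun _ _ => Nat.zero_le _) (Finset.mem_univ _)
        _ = (Finsupp.equivFunOnFinite.symm fun _ => ∑ i, b i) s(i, j) := by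
            simp
  exact Set.Finite.subset (Finset.finite_toSet _) hsub

variable (k : Type*) [Field k]

/-- the polynomial ring `k[x_{ij}]`. -/
abbrev R := MvPolynomial (Sym2 (Fin n)) k

/-- The principal minor ideal `J_n`. -/
noncomputable def Jideal : Ideal (R n k) :=
  Ideal.span {f | ∃ i j : Fin n, i < j ∧ f = X s(i, i) * X s(j, j) - X s(i, j) ^ 2}

/-- The map `x_{ij} ↦ t_i t_j`. -/
noncomputable def veroHom : R n k →ₐ[k] MvPolynomial (Fin n) k :=
  aeval fun s => Sym2.lift ⟨fun a b => X a * X b, fun a b => mul_comm _ _⟩ s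

/-- The second Veronese ideal `I_n`. -/
noncomputable def Iideal : Ideal (R n k) := RingHom.ker (veroHom n k)

/-- A ℤ₂-twisting: an automorphism sending each variable to ± itself. -/
def IsTwisting (φ : R n k ≃ₐ[k] R n k) : Prop :=
  ∀ s : Sym2 (Fin n), φ (X s) = X s ∨ φ (X s) = - X s

/-- `f` is V_n-homogeneous of degree `b`. -/
def VHomog (f : R n k) (b : Fin n → ℕ) : Prop := ∀ u ∈ f.support, VN n u = b

/-- The fiber over `b` as a finite set. -/
noncomputable def fiberFinset (b : Fin n → ℕ) : Finset (Sym2 (Fin n) →₀ ℕ) :=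
  (fiber_finite n b).toFinset

/-- generating function of the canonical (0/1 off-diagonal) representatives of
the fiber over `b`. -/
noncomputable def pplusAt (b : Fin n → ℕ) : R n k :=
  ∑ u ∈ (fiberFinset n b).filter (fun u => ∀ s : Sym2 (Fin n), ¬s.IsDiag → u s ≤ 1),
    monomial u (1 : k)

/-- `p⁺_{n,j}` (for `n` odd): fiber over `(n-2,…,n-2) + e_j`. -/
noncomputable def pplusOdd (j : Fin n) : R n k :=
  pplusAt n k fun i => (n - 2) + if i = j then 1 else 0

/-- `p⁺_n` (for `n` even): fiber over `(n-2,…,n-2)`. -/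
noncomputable def pplusEven : R n k :=
  pplusAt n k fun _ => n - 2

/-- `p_n = ∏_{i<j∈[n-1]} (x_{ij} x_{nn} + x_{in} x_{jn})`. -/
noncomputable def pn (hn : 0 < n) : R n k :=
  ∏ p ∈ Finset.univ.filter (fun p : Fin (n - 1) × Fin (n - 1) => p.1 < p.2),
    (X s(ι n p.1, ι n p.2) * X s(lastIdx n hn, lastIdx n hn)
      + X s(ι n p.1, lastIdx n hn) * X s(ι n p.2, lastIdx n hn))

section Degree

variable {n}

lemma wtN_mk (a b i : Fin n) :
    wtN n s(a, b) i = (if i = a then 1 else 0) + (if i = b then 1 else 0) := rfl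

lemma wtN_mk_add_wtN_mk (a b c d : Fin n) :
    wtN n s(a, b) + wtN n s(c, d) = wtN n s(a, d) + wtN n s(b, c) := by
  funext i
  simp only [Pi.add_apply, wtN_mk]
  ring

variable (n) in
/-- The Veronese degree `VN` as an additive homomorphism. -/
def degreeHom : (Sym2 (Fin n) →₀ ℕ) →+ (Fin n → ℕ) where
  toFun := VN n
  map_zero' := by funext i; simp [VN]
  map_add' u v := by funext i; simp [VN, add_mul, Finset.sum_add_distrib]

lemma degreeHom_apply (u : Sym2 (Fin n) →₀ ℕ) : degreeHom n u = VN n u := rfl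

lemma degreeHom_single (s : Sym2 (Fin n)) (m : ℕ) :
    degreeHom n (Finsupp.single s m) = m • wtN n s := by
  funext i
  simp [degreeHom, VN, Finsupp.single_apply]

lemma degreeHom_single_diag (r : Fin n) (m : ℕ) :
    degreeHom n (Finsupp.single s(r, r) m) = Pi.single r (2 * m) := by
  funext i
  rw [degreeHom_single, Pi.smul_apply, wtN_mk, Pi.single_apply]
  split_ifs
  · rw [smul_eq_mul, mul_comm]
  · rfl

lemma wtN_apply_eq_sum (s : Sym2 (Fin n)) (i : Fin n) :
    wtN n s i = (if s = s(i, i) then 1 else 0) + ∑ l, if s = s(i, l) then 1 else 0 := by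
  induction s with
  | _ a b =>
    rw [wtN_mk]
    by_cases ha : i = a <;> by_cases hb : i = b
    · simp [← ha, ← hb]
    · simp [← ha, hb, Ne.symm hb]
    · simp [ha, ← hb, Ne.symm ha]
    · simp [ha, hb, Ne.symm ha, Ne.symm hb]

lemma VN_apply (u : Sym2 (Fin n) →₀ ℕ) (i : Fin n) :
    VN n u i = 2 * u s(i, i) + ∑ l ∈ Finset.univ.erase i, u s(i, l) := by
  have hsum : VN n u i = u s(i, i) + ∑ l, u s(i, l) := by
    simp only [VN, wtN_apply_eq_sum, mul_add, Finset.mul_sum, Finset.sum_add_distrib]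
    rw [Finset.sum_comm]
    simp
  rw [hsum, ← Finset.add_sum_erase Finset.univ _ (Finset.mem_univ i)]
  ring

lemma not_isDiag_of_mem_erase {i l : Fin n} (hl : l ∈ Finset.univ.erase i) :
    ¬ (s(i, l)).IsDiag := by
  simpa [Sym2.mk_isDiag_iff] using (Finset.ne_of_mem_erase hl).symm

lemma eq_of_VN_eq_of_offDiag_eq {u v : Sym2 (Fin n) →₀ ℕ} (h : VN n u = VN n v)
    (hoff : ∀ s : Sym2 (Fin n), ¬ s.IsDiag → u s = v s) : u = v := by
  ext s
  by_cases hs : s.IsDiag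
  · obtain ⟨i, rfl⟩ : ∃ i, s(i, i) = s := ⟨_, Sym2.diag_diagElem hs⟩
    have hi := congrFun h i
    rw [VN_apply, VN_apply, Finset.sum_congr rfl fun l hl => hoff _ (not_isDiag_of_mem_erase hl)]
      at hi
    omega
  · exact hoff s hs

end Degree

section Canonical

variable {n}

/-- An exponent is canonical if its monomial is squarefree in the off-diagonal variables. These are
the exponents summed over in `pplusAt`. -/
def IsCanonical (u : Sym2 (Fin n) →₀ ℕ) : Prop :=
  ∀ s : Sym2 (Fin n), ¬ s.IsDiag → u s ≤ 1

/-- The exponent `e_{aa} + e_{bb}` of the monomial that replaces `x_{ab} ^ 2`. -/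
noncomputable def diagExp : Sym2 (Fin n) → (Sym2 (Fin n) →₀ ℕ) :=
  Sym2.lift ⟨fun a b => Finsupp.single s(a, a) 1 + Finsupp.single s(b, b) 1,
    fun _ _ => add_comm _ _⟩

lemma diagExp_mk (a b : Fin n) :
    diagExp s(a, b) = Finsupp.single s(a, a) 1 + Finsupp.single s(b, b) 1 := rfl

lemma diagExp_apply_of_not_isDiag (s : Sym2 (Fin n)) {t : Sym2 (Fin n)} (ht : ¬ t.IsDiag) :
    diagExp s t = 0 := by
  have hne (a : Fin n) : t ≠ s(a, a) := by
    rintro rfl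
    exact ht (Sym2.diag_isDiag a)
  induction s with
  | _ a b =>
    rw [diagExp_mk, Finsupp.add_apply, Finsupp.single_eq_of_ne (hne a),
      Finsupp.single_eq_of_ne (hne b), add_zero]

lemma degreeHom_diagExp (s : Sym2 (Fin n)) :
    degreeHom n (diagExp s) = 2 • degreeHom n (Finsupp.single s 1) := by
  induction s with
  | _ a b =>
    rw [diagExp_mk, map_add, degreeHom_single, degreeHom_single, degreeHom_single, one_smul,
      one_smul, one_smul, wtN_mk_add_wtN_mk, two_nsmul]

/-- The canonical representative of an exponent modulo the lattice generated by the vectors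
`e_{aa} + e_{bb} - 2 e_{ab}`. -/
noncomputable def canonicalRep (u : Sym2 (Fin n) →₀ ℕ) : Sym2 (Fin n) →₀ ℕ :=
  ∑ s, (Finsupp.single s (u s % 2) + (u s / 2) • diagExp s)

lemma canonicalRep_apply_of_not_isDiag (u : Sym2 (Fin n) →₀ ℕ) {s : Sym2 (Fin n)}
    (hs : ¬ s.IsDiag) : canonicalRep u s = u s % 2 := by
  simp [canonicalRep, Finsupp.finsetSum_apply, diagExp_apply_of_not_isDiag _ hs,
    Finsupp.single_apply]

lemma isCanonical_canonicalRep (u : Sym2 (Fin n) →₀ ℕ) : IsCanonical (canonicalRep u) := by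
  intro s hs
  rw [canonicalRep_apply_of_not_isDiag u hs]
  omega

lemma map_canonicalRep {M : Type*} [AddCommMonoid M] (φ : (Sym2 (Fin n) →₀ ℕ) →+ M)
    (hφ : ∀ s, φ (diagExp s) = 2 • φ (Finsupp.single s 1)) (u : Sym2 (Fin n) →₀ ℕ) :
    φ (canonicalRep u) = φ u := by
  have hsingle (s : Sym2 (Fin n)) (m : ℕ) :
      φ (Finsupp.single s m) = m • φ (Finsupp.single s 1) := by
    rw [← map_nsmul, Finsupp.smul_single_one]
  calc φ (canonicalRep u) = ∑ s, φ (Finsupp.single s (u s)) := by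
        rw [canonicalRep, map_sum]
        refine Finset.sum_congr rfl fun s _ => ?_
        rw [map_add, map_nsmul, hφ, hsingle s (u s % 2), hsingle s (u s), smul_smul, ← add_smul,
          mul_comm, Nat.mod_add_div]
    _ = φ u := by rw [← map_sum, Finsupp.univ_sum_single]

lemma VN_canonicalRep (u : Sym2 (Fin n) →₀ ℕ) : VN n (canonicalRep u) = VN n u :=
  map_canonicalRep (degreeHom n) degreeHom_diagExp u

/-- The monomial `x ^ u` as a homomorphism in its exponent `u`. -/
def monomialHom {σ A : Type*} [Fintype σ] [CommMonoid A] (x : σ → A) :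
    (σ →₀ ℕ) →+ Additive A where
  toFun u := .ofMul (∏ s, x s ^ u s)
  map_zero' := by simp
  map_add' u v := by simp [pow_add, Finset.prod_mul_distrib]

lemma monomialHom_apply {σ A : Type*} [Fintype σ] [CommMonoid A] (x : σ → A) (u : σ →₀ ℕ) :
    monomialHom x u = .ofMul (∏ s, x s ^ u s) := rfl

lemma monomialHom_single {σ A : Type*} [Fintype σ] [CommMonoid A] (x : σ → A) (s : σ) (c : ℕ) :
    monomialHom x (Finsupp.single s c) = .ofMul (x s ^ c) := by
  classical
  simp [monomialHom_apply, Finsupp.single_apply, pow_ite]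

lemma monomialHom_single_one {σ A : Type*} [Fintype σ] [CommMonoid A] (x : σ → A) (s : σ) :
    monomialHom x (Finsupp.single s 1) = .ofMul (x s) := by
  rw [monomialHom_single, pow_one]

lemma prod_pow_canonicalRep {A : Type*} [CommMonoid A] (x : Sym2 (Fin n) → A)
    (hx : ∀ i j, i < j → x s(i, i) * x s(j, j) = x s(i, j) ^ 2) (u : Sym2 (Fin n) →₀ ℕ) :
    ∏ s, x s ^ canonicalRep u s = ∏ s, x s ^ u s := by
  have hdiag (s : Sym2 (Fin n)) :
      monomialHom x (diagExp s) = 2 • monomialHom x (Finsupp.single s 1) := by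
    induction s with
    | _ a b =>
      rw [diagExp_mk, map_add, monomialHom_single_one, monomialHom_single_one,
        monomialHom_single_one, ← ofMul_mul, ← ofMul_pow]
      congr 1
      rcases lt_trichotomy a b with hab | rfl | hab
      · exact hx a b hab
      · exact (sq _).symm
      · rw [mul_comm, hx b a hab, Sym2.eq_swap]
  exact congrArg Additive.toMul (map_canonicalRep (monomialHom x) hdiag u)

lemma eq_castSucc_last_or_eq_castSucc_castSucc {m : ℕ} {s : Sym2 (Fin (m + 1))}
    (hs : ¬ s.IsDiag) :
    (∃ a : Fin m, s = s(a.castSucc, Fin.last m)) ∨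
      ∃ a b : Fin m, a < b ∧ s = s(a.castSucc, b.castSucc) := by
  induction s with
  | _ i j =>
    wlog hij : i < j generalizing i j
    · rw [Sym2.eq_swap]
      rw [Sym2.eq_swap] at hs
      exact this j i hs (lt_of_le_of_ne (not_lt.1 hij) fun h => hs (h ▸ Sym2.diag_isDiag _))
    obtain ⟨a, rfl⟩ := Fin.exists_castSucc_eq.2 (Fin.ne_last_of_lt hij)
    induction j using Fin.lastCases with
    | last => exact .inl ⟨a, rfl⟩
    | cast b => exact .inr ⟨a, b, Fin.castSucc_lt_castSucc_iff.1 hij, rfl⟩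

lemma IsCanonical.eq_of_VN_eq {m : ℕ} {u v : Sym2 (Fin (m + 1)) →₀ ℕ} (hu : IsCanonical u)
    (hv : IsCanonical v) (h : VN (m + 1) u = VN (m + 1) v)
    (hcast : ∀ a b : Fin m, a < b →
      u s(a.castSucc, b.castSucc) = v s(a.castSucc, b.castSucc)) : u = v := by
  refine eq_of_VN_eq_of_offDiag_eq h fun s hs => ?_
  obtain ⟨a, rfl⟩ | ⟨a, b, hab, rfl⟩ := eq_castSucc_last_or_eq_castSucc_castSucc hs
  · have hdeg := congrFun h a.castSucc
    have hmem : Fin.last m ∈ Finset.univ.erase a.castSucc :=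
      Finset.mem_erase.2 ⟨(Fin.castSucc_ne_last a).symm, Finset.mem_univ _⟩
    have hsum : ∑ l ∈ (Finset.univ.erase a.castSucc).erase (Fin.last m), u s(a.castSucc, l) =
        ∑ l ∈ (Finset.univ.erase a.castSucc).erase (Fin.last m), v s(a.castSucc, l) := by
      refine Finset.sum_congr rfl fun l hl => ?_
      obtain ⟨hlast, hl⟩ := Finset.mem_erase.1 hl
      obtain ⟨b, rfl⟩ := Fin.exists_castSucc_eq.2 hlast
      have hab : a ≠ b := fun hab => Finset.ne_of_mem_erase hl (hab ▸ rfl)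
      rcases lt_or_gt_of_ne hab with hab | hab
      · exact hcast a b hab
      · rw [Sym2.eq_swap, hcast b a hab]
    rw [VN_apply, VN_apply, ← Finset.add_sum_erase _ _ hmem, ← Finset.add_sum_erase _ _ hmem,
      hsum] at hdeg
    -- The degree fixes the parity of the exponent of `x_{an}`, which is at most `1`.
    have := hu _ hs
    have := hv _ hs
    omega
  · exact hcast a b hab

lemma IsCanonical.VN_le {u : Sym2 (Fin n) →₀ ℕ} (hu : IsCanonical u) (r : Fin n) :
    VN n u r ≤ 2 * u s(r, r) + (n - 1) := by
  rw [VN_apply]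
  gcongr
  calc ∑ l ∈ Finset.univ.erase r, u s(r, l) ≤ ∑ l ∈ Finset.univ.erase r, 1 :=
        Finset.sum_le_sum fun l hl => hu _ (not_isDiag_of_mem_erase hl)
    _ = n - 1 := by simp [Finset.card_erase_of_mem]

lemma isCanonical_single_diag_add_iff {r : Fin n} {c : ℕ} {u : Sym2 (Fin n) →₀ ℕ} :
    IsCanonical (Finsupp.single s(r, r) c + u) ↔ IsCanonical u := by
  refine forall₂_congr fun s hs => ?_
  have hne : s ≠ s(r, r) := by
    rintro rfl
    exact hs (Sym2.diag_isDiag r)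
  rw [Finsupp.add_apply, Finsupp.single_eq_of_ne hne, zero_add]

end Canonical

section CanonicalFiber

variable {n}

variable (n) in
/-- The canonical exponents of Veronese degree `b`, that is, the index set of `pplusAt`. -/
noncomputable def canonicalFiber (b : Fin n → ℕ) : Finset (Sym2 (Fin n) →₀ ℕ) :=
  (fiberFinset n b).filter fun u => ∀ s : Sym2 (Fin n), ¬ s.IsDiag → u s ≤ 1

lemma mem_canonicalFiber {b : Fin n → ℕ} {u : Sym2 (Fin n) →₀ ℕ} :
    u ∈ canonicalFiber n b ↔ VN n u = b ∧ IsCanonical u := by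
  rw [canonicalFiber, Finset.mem_filter, fiberFinset, Set.Finite.mem_toFinset]
  rfl

lemma canonicalFiber_add_single {b : Fin n → ℕ} {r : Fin n} (hb : n ≤ b r + 2) (c : ℕ) :
    canonicalFiber n (b + Pi.single r (2 * c)) =
      (canonicalFiber n b).map (addLeftEmbedding (Finsupp.single s(r, r) c)) := by
  have hmem (u : Sym2 (Fin n) →₀ ℕ) :
      Finsupp.single s(r, r) c + u ∈ canonicalFiber n (b + Pi.single r (2 * c)) ↔
        u ∈ canonicalFiber n b := by
    rw [mem_canonicalFiber, mem_canonicalFiber, isCanonical_single_diag_add_iff,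
      ← degreeHom_apply, map_add, degreeHom_single_diag, add_comm, add_left_inj, degreeHom_apply]
  ext v
  simp only [Finset.mem_map, addLeftEmbedding_apply]
  constructor
  · intro hv
    obtain ⟨hdeg, hcan⟩ := mem_canonicalFiber.1 hv
    have hle : Finsupp.single s(r, r) c ≤ v := by
      have := hcan.VN_le r
      rw [hdeg, Pi.add_apply, Pi.single_eq_same] at this
      exact Finsupp.single_le_iff.2 (by omega)
    obtain ⟨u, rfl⟩ := exists_add_of_le hle
    exact ⟨u, (hmem u).1 hv, rfl⟩
  · rintro ⟨u, hu, rfl⟩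
    exact (hmem u).2 hu

/-- The edges of the complete graph on `Fin m`, oriented upwards as in the product `pn`. -/
def edges (m : ℕ) : Finset (Fin m × Fin m) :=
  Finset.univ.filter fun p => p.1 < p.2

lemma mem_edges {m : ℕ} {p : Fin m × Fin m} : p ∈ edges m ↔ p.1 < p.2 := by
  simp [edges]

lemma sum_edges_add {m : ℕ} {M : Type*} [AddCommMonoid M] (f : Fin m → M) :
    ∑ p ∈ edges m, (f p.1 + f p.2) = (m - 1) • ∑ a, f a := by
  calc ∑ p ∈ edges m, (f p.1 + f p.2) = ∑ a, ∑ b ∈ Finset.Ioi a, (f a + f b) := by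
        simp only [edges, Finset.sum_filter, Fintype.sum_prod_type, ← Finset.filter_lt_eq_Ioi]
    _ = ∑ a, ∑ _b ∈ {a}ᶜ, f a :=
        Finset.sum_sum_Ioi_add_eq_sum_sum_off_diag fun _ b => f b
    _ = (m - 1) • ∑ a, f a := by simp [Finset.card_compl, Finset.smul_sum]

lemma sum_canonicalFiber_eq_sum_powerset_edges {m : ℕ} {M : Type*} [AddCommMonoid M]
    (f : (Sym2 (Fin (m + 1)) →₀ ℕ) → M) (hf : ∀ u, f (canonicalRep u) = f u)
    {b : Fin (m + 1) → ℕ} {w : Finset (Fin m × Fin m) → (Sym2 (Fin (m + 1)) →₀ ℕ)}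
    (hdeg : ∀ G ⊆ edges m, VN (m + 1) (w G) = b)
    (hcast : ∀ G ⊆ edges m, ∀ p ∈ edges m,
      w G s(p.1.castSucc, p.2.castSucc) = if p ∈ G then 1 else 0) :
    ∑ u ∈ canonicalFiber (m + 1) b, f u = ∑ G ∈ (edges m).powerset, f (w G) := by
  have hrep {G : Finset (Fin m × Fin m)} (hG : G ⊆ edges m) {p : Fin m × Fin m}
      (hp : p ∈ edges m) :
      canonicalRep (w G) s(p.1.castSucc, p.2.castSucc) = if p ∈ G then 1 else 0 := by
    rw [canonicalRep_apply_of_not_isDiag, hcast G hG p hp]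
    · split_ifs <;> rfl
    · simpa [Sym2.mk_isDiag_iff] using (mem_edges.1 hp).ne
  refine (Finset.sum_nbij' (fun G => canonicalRep (w G))
    (fun u => {p ∈ edges m | u s(p.1.castSucc, p.2.castSucc) = 1}) ?_ ?_ ?_ ?_ ?_).symm
  · intro G hG
    exact mem_canonicalFiber.2
      ⟨(VN_canonicalRep _).trans (hdeg G (Finset.mem_powerset.1 hG)), isCanonical_canonicalRep _⟩
  · intro u _
    exact Finset.mem_powerset.2 (Finset.filter_subset _ _)
  · intro G hG
    rw [Finset.mem_powerset] at hG
    ext p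
    rw [Finset.mem_filter]
    constructor
    · rintro ⟨hp, hone⟩
      by_contra hpG
      simp [hrep hG hp, hpG] at hone
    · intro hp
      exact ⟨hG hp, by rw [hrep hG (hG hp), if_pos hp]⟩
  · intro u hu
    obtain ⟨hudeg, hucan⟩ := mem_canonicalFiber.1 hu
    have hG := Finset.filter_subset (fun p => u s(p.1.castSucc, p.2.castSucc) = 1) (edges m)
    refine (isCanonical_canonicalRep _).eq_of_VN_eq hucan
      (((VN_canonicalRep _).trans (hdeg _ hG)).trans hudeg.symm) fun a b hab => ?_
    have hp : (a, b) ∈ edges m := mem_edges.2 hab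
    have hle : u s(a.castSucc, b.castSucc) ≤ 1 :=
      hucan _ (by simpa [Sym2.mk_isDiag_iff] using hab.ne)
    rw [hrep hG hp]
    simp only [Finset.mem_filter, hp, true_and]
    split_ifs <;> omega
  · intro G _
    exact (hf _).symm

end CanonicalFiber

section SubgraphExpansion

variable {m : ℕ}

/-- The exponent of the term of `x_{in} p_n` in which the factor of each edge `{a, b}` of `G`
contributes `x_{ab} x_{nn}` and that of each other edge contributes `x_{an} x_{bn}`. -/
noncomputable def subgraphExp (i : Fin (m + 1)) (G : Finset (Fin m × Fin m)) :
    Sym2 (Fin (m + 1)) →₀ ℕ :=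
  Finsupp.single s(i, Fin.last m) 1 +
    (∑ p ∈ G, (Finsupp.single s(p.1.castSucc, p.2.castSucc) 1 +
        Finsupp.single s(Fin.last m, Fin.last m) 1) +
      ∑ p ∈ edges m \ G, (Finsupp.single s(p.1.castSucc, Fin.last m) 1 +
        Finsupp.single s(p.2.castSucc, Fin.last m) 1))

lemma VN_subgraphExp (i : Fin (m + 1)) {G : Finset (Fin m × Fin m)} (hG : G ⊆ edges m) :
    VN (m + 1) (subgraphExp i G) = wtN (m + 1) s(i, Fin.last m) +
      (m - 1) • ∑ a : Fin m, wtN (m + 1) s(a.castSucc, Fin.last m) := by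
  rw [← sum_edges_add, ← Finset.sum_sdiff hG, ← degreeHom_apply, subgraphExp]
  simp only [map_add, map_sum, degreeHom_single, one_smul]
  rw [add_comm (∑ p ∈ G, _)]
  congr 2
  refine Finset.sum_congr rfl fun p _ => ?_
  rw [wtN_mk_add_wtN_mk, Sym2.eq_swap (a := p.2.castSucc)]

lemma two_mul_mul_sub_two_div_two_add_one (hm : 0 < m) (heven : Even m) :
    2 * (m * (m - 2) / 2 + 1) = (m - 1) * (m - 1) + 1 := by
  obtain ⟨t, rfl⟩ := heven.two_dvd
  obtain ⟨t, rfl⟩ := Nat.exists_eq_succ_of_ne_zero (by omega : t ≠ 0)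
  have hdvd : 2 ∣ 2 * t.succ * (2 * t.succ - 2) := (dvd_mul_right 2 _).mul_right _
  rw [mul_add, Nat.mul_div_cancel' hdvd]
  have h1 : 2 * t.succ - 1 = 2 * t + 1 := by omega
  have h2 : 2 * t.succ - 2 = 2 * t := by omega
  rw [h1, h2, Nat.succ_eq_add_one]
  ring

lemma VN_subgraphExp_eq_add_single (hm : 0 < m) (heven : Even m) (i : Fin (m + 1))
    {G : Finset (Fin m × Fin m)} (hG : G ⊆ edges m) :
    VN (m + 1) (subgraphExp i G) = (fun l => (m - 1) + if l = i then 1 else 0) +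
      Pi.single (Fin.last m) (2 * (m * (m - 2) / 2 + 1)) := by
  rw [VN_subgraphExp i hG, two_mul_mul_sub_two_div_two_add_one hm heven]
  funext l
  simp only [Pi.add_apply, Pi.smul_apply, Finset.sum_apply, wtN_mk, smul_eq_mul]
  induction l using Fin.lastCases with
  | last =>
    obtain ⟨t, rfl⟩ := Nat.exists_eq_succ_of_ne_zero hm.ne'
    simp only [Nat.succ_eq_add_one, if_true, add_tsub_cancel_right, (Fin.castSucc_ne_last _).symm,
      if_false, zero_add, Finset.sum_const, Finset.card_univ, Fintype.card_fin, smul_eq_mul,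
      mul_one, Pi.single_eq_same]
    ring
  | cast j => simp [Fin.castSucc_ne_last, add_comm]

lemma subgraphExp_apply_castSucc (i : Fin (m + 1)) {G : Finset (Fin m × Fin m)}
    (hG : G ⊆ edges m) {p : Fin m × Fin m} (hp : p ∈ edges m) :
    subgraphExp i G s(p.1.castSucc, p.2.castSucc) = if p ∈ G then 1 else 0 := by
  have hlast (j : Fin (m + 1)) : s(j, Fin.last m) ≠ s(p.1.castSucc, p.2.castSucc) := by
    simp [(Fin.castSucc_ne_last _).symm]
  have hedge (q : Fin m × Fin m) (hq : q ∈ G) :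
      s(q.1.castSucc, q.2.castSucc) = s(p.1.castSucc, p.2.castSucc) ↔ q = p := by
    have hq := mem_edges.1 (hG hq)
    have hp := mem_edges.1 hp
    rw [Sym2.eq_iff, Prod.ext_iff]
    simp only [Fin.castSucc_inj]
    omega
  simp only [subgraphExp, Finsupp.add_apply, Finsupp.finsetSum_apply, Finsupp.single_apply, hlast,
    if_false, add_zero, zero_add, Finset.sum_const_zero]
  rw [Finset.sum_congr rfl fun q hq => if_congr (hedge q hq) rfl rfl, Finset.sum_ite_eq']

lemma mul_prod_edges_eq_sum_subgraphExp {A : Type*} [CommSemiring A]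
    (x : Sym2 (Fin (m + 1)) → A) (i : Fin (m + 1)) :
    x s(i, Fin.last m) * ∏ p ∈ edges m,
        (x s(p.1.castSucc, p.2.castSucc) * x s(Fin.last m, Fin.last m) +
          x s(p.1.castSucc, Fin.last m) * x s(p.2.castSucc, Fin.last m)) =
      ∑ G ∈ (edges m).powerset, ∏ s, x s ^ subgraphExp i G s := by
  rw [Finset.prod_add, Finset.mul_sum]
  refine Finset.sum_congr rfl fun G _ => Additive.ofMul.injective ?_
  rw [← monomialHom_apply, subgraphExp]
  simp only [map_add, map_sum, monomialHom_single_one, ofMul_mul, ofMul_prod]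

end SubgraphExpansion

lemma pow_mul_sum_canonicalFiber {n : ℕ} {A : Type*} [CommSemiring A] (x : Sym2 (Fin n) → A)
    {b : Fin n → ℕ} {r : Fin n} (hb : n ≤ b r + 2) (c : ℕ) :
    x s(r, r) ^ c * ∑ u ∈ canonicalFiber n b, ∏ s, x s ^ u s =
      ∑ u ∈ canonicalFiber n (b + Pi.single r (2 * c)), ∏ s, x s ^ u s := by
  rw [canonicalFiber_add_single hb, Finset.sum_map, Finset.mul_sum]
  refine Finset.sum_congr rfl fun u _ => Additive.ofMul.injective ?_
  rw [← monomialHom_apply, addLeftEmbedding_apply, map_add, monomialHom_single, ofMul_mul,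
    monomialHom_apply]

theorem xnn_pow_mul_pplus_odd_general (n : ℕ) (hn : 3 ≤ n) (hodd : Odd n) {A : Type*}
    [CommSemiring A] (x : Sym2 (Fin n) → A)
    (hx : ∀ i j, i < j → x s(i, i) * x s(j, j) = x s(i, j) ^ 2) (i : Fin n) :
    x s(lastIdx n (pos_of_gt hn), lastIdx n (pos_of_gt hn)) ^ ((n - 1) * (n - 3) / 2 + 1) *
        ∑ u ∈ canonicalFiber n fun l => (n - 2) + if l = i then 1 else 0, ∏ s, x s ^ u s =
      x s(i, lastIdx n (pos_of_gt hn)) * ∏ p ∈ edges (n - 1),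
        (x s(ι n p.1, ι n p.2) * x s(lastIdx n (pos_of_gt hn), lastIdx n (pos_of_gt hn)) +
          x s(ι n p.1, lastIdx n (pos_of_gt hn)) * x s(ι n p.2, lastIdx n (pos_of_gt hn))) := by
  obtain ⟨m, rfl⟩ : ∃ m, n = m + 1 := ⟨n - 1, by omega⟩
  have heven : Even m := by simpa [Nat.odd_add_one] using hodd
  have hshift := pow_mul_sum_canonicalFiber x (r := Fin.last m)
    (b := fun l => (m - 1) + if l = i then 1 else 0) (by omega) (m * (m - 2) / 2 + 1)
  have hexpand := sum_canonicalFiber_eq_sum_powerset_edges (fun u => ∏ s, x s ^ u s)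
    (prod_pow_canonicalRep x hx) (fun _ hG => VN_subgraphExp_eq_add_single (by omega) heven i hG)
    fun _ hG _ hp => subgraphExp_apply_castSucc i hG hp
  exact hshift.trans (hexpand.trans (mul_prod_edges_eq_sum_subgraphExp x i).symm)

section Quotient

variable {n k}

lemma map_pplusAt {B : Type*} [CommSemiring B] (f : R n k →+* B) (b : Fin n → ℕ) :
    f (pplusAt n k b) = ∑ u ∈ canonicalFiber n b, ∏ s, f (X s) ^ u s := by
  rw [pplusAt, map_sum]
  refine Finset.sum_congr rfl fun u _ => ?_
  rw [monomial_eq, map_one, one_mul, Finsupp.prod_pow, map_prod]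
  simp only [map_pow]

lemma map_pn {B : Type*} [CommSemiring B] (f : R n k →+* B) (hn : 0 < n) :
    f (pn n k hn) = ∏ p ∈ edges (n - 1),
      (f (X s(ι n p.1, ι n p.2)) * f (X s(lastIdx n hn, lastIdx n hn)) +
        f (X s(ι n p.1, lastIdx n hn)) * f (X s(ι n p.2, lastIdx n hn))) := by
  simp only [pn, edges, map_prod, map_add, map_mul]

lemma mk_X_diag_mul_mk_X_diag (i j : Fin n) (hij : i < j) :
    Ideal.Quotient.mk (Jideal n k) (X s(i, i)) * Ideal.Quotient.mk (Jideal n k) (X s(j, j)) =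
      Ideal.Quotient.mk (Jideal n k) (X s(i, j)) ^ 2 := by
  rw [← map_mul, ← map_pow, Ideal.Quotient.eq]
  exact Ideal.subset_span ⟨i, j, hij, rfl⟩

end Quotient

/-- For odd `n ≥ 3`, with `σ = (n-1)(n-3)/2`:
`x_{nn}^{σ+1} · p⁺_{n,i} = x_{in} · p_n` in `k[x]/J_n` for every `i`. -/
theorem xnn_pow_mul_pplus_odd (n : ℕ) (hn : 3 ≤ n) (hodd : Odd n)
    (k : Type*) [Field k] (i : Fin n) :
    X s(lastIdx n (by omega), lastIdx n (by omega)) ^ ((n - 1) * (n - 3) / 2 + 1) *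
        pplusOdd n k i -
      X s(i, lastIdx n (by omega)) * pn n k (by omega) ∈ Jideal n k := by
  rw [← Ideal.Quotient.eq, map_mul, map_mul, map_pow, pplusOdd, map_pplusAt, map_pn]
  exact xnn_pow_mul_pplus_odd_general n hn hodd (fun s => Ideal.Quotient.mk (Jideal n k) (X s))
    mk_X_diag_mul_mk_X_diag i

end Veronese
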